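/- For every ideal I of R = ℂ[x₁,…,xₙ] and every integer d ≥ 0, the dimension of the truncated dual space of I equals the colength of I plus the (d+1)-st power of the maximal ideal: dim_ℂ D₀^d[I] = dim_ℂ R₀/(IR₀ + m^{d+1}), where m = ⟨x₁,…,xₙ⟩. -/

import Mathlib

open MvPolynomial

noncomputable section

/-- The polynomial ring `R = ℂ[x₁,…,xₙ]`. -/
abbrev Rn (n : ℕ) := MvPolynomial (Fin n) ℂ

/-- Total degree of a monomial exponent vector. -/
def mdeg {n : ℕ} (m : Fin n →₀ ℕ) : ℕ := m.sum fun _ e => e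

/-- The truncated dual space `D₀^d`: linear functionals on `R` vanishing on all
monomials of degree greater than `d` (identified with `(R_d)*`). -/
def DualTrunc (n d : ℕ) : Submodule ℂ (Module.Dual ℂ (Rn n)) where
  carrier := {p | ∀ m : Fin n →₀ ℕ, d < mdeg m → p (monomial m 1) = 0}
  add_mem' := by
    intro p q hp hq m hm
    simp [hp m hm, hq m hm]
  zero_mem' := by
    intro m hm
    simp
  smul_mem' := by
    intro c p hp m hm
    simp [hp m hm]

/-- The Macaulay dual space `D₀` at the origin: linear functionals on `R` vanishing
on all monomials of sufficiently large degree, i.e. `⋃ d, D₀^d`. -/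
def MacaulayDual (n : ℕ) : Submodule ℂ (Module.Dual ℂ (Rn n)) where
  carrier := {p | ∃ d : ℕ, ∀ m : Fin n →₀ ℕ, d < mdeg m → p (monomial m 1) = 0}
  add_mem' := by
    rintro p q ⟨d₁, hp⟩ ⟨d₂, hq⟩
    refine ⟨max d₁ d₂, fun m hm => ?_⟩
    simp [hp m (lt_of_le_of_lt (le_max_left _ _) hm),
          hq m (lt_of_le_of_lt (le_max_right _ _) hm)]
  zero_mem' := ⟨0, fun m _ => rfl⟩
  smul_mem' := by
    rintro c p ⟨d, hp⟩
    exact ⟨d, fun m hm => by simp [hp m hm]⟩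

/-- The space of linear functionals annihilating an ideal `I`. -/
def annIdeal {n : ℕ} (I : Ideal (Rn n)) : Submodule ℂ (Module.Dual ℂ (Rn n)) where
  carrier := {p | ∀ f ∈ I, p f = 0}
  add_mem' := by
    intro p q hp hq f hf
    simp [hp f hf, hq f hf]
  zero_mem' := by intro f _; rfl
  smul_mem' := by
    intro c p hp f hf
    simp [hp f hf]

/-- The Macaulay dual space `D₀[I] = {p ∈ D₀ : p(f) = 0 for all f ∈ I}`. -/
def dualOf {n : ℕ} (I : Ideal (Rn n)) : Submodule ℂ (Module.Dual ℂ (Rn n)) :=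
  MacaulayDual n ⊓ annIdeal I

/-- The truncated dual space `D₀^d[I] = D₀[I] ∩ D₀^d`. -/
def truncDualOf {n : ℕ} (I : Ideal (Rn n)) (d : ℕ) : Submodule ℂ (Module.Dual ℂ (Rn n)) :=
  DualTrunc n d ⊓ annIdeal I

/-- The contraction `IR₀ ∩ R` of the extension of `I` to the localization at the
origin: `{g ∈ R : ∃ h ∈ R with h(0) ≠ 0 and h·g ∈ I}`. -/
def contraction {n : ℕ} (I : Ideal (Rn n)) : Set (Rn n) :=
  {g | ∃ h : Rn n, eval (0 : Fin n → ℂ) h ≠ 0 ∧ h * g ∈ I}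

/-- The maximal ideal `m = ⟨x₁,…,xₙ⟩` at the origin, as the kernel of evaluation at `0`. -/
def mIdeal (n : ℕ) : Ideal (Rn n) := RingHom.ker (eval (0 : Fin n → ℂ))

instance (n : ℕ) : (mIdeal n).IsPrime := RingHom.ker_isPrime _

/-- The localization `R₀` of `R` at the maximal ideal of the origin. -/
abbrev Loc (n : ℕ) := Localization.AtPrime (mIdeal n)

/-- The extension `JR₀` of an ideal `J ⊆ R` to the localization `R₀`. -/
def extIdeal {n : ℕ} (J : Ideal (Rn n)) : Ideal (Loc n) :=
  J.map (algebraMap (Rn n) (Loc n))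

/-- Differentiation `σ_f : D₀ → D₀` by `f ∈ R`, `(σ_f p)(g) = p (f * g)`. -/
def sigma {n : ℕ} (f : Rn n) : Module.Dual ℂ (Rn n) →ₗ[ℂ] Module.Dual ℂ (Rn n) :=
  (LinearMap.mulLeft ℂ f).dualMap

/-- A graded monomial order on exponent vectors in `ℕⁿ`: a strict total order
compatible with addition and refining total degree. -/
structure IsGradedMonomialOrder {n : ℕ} (lt : (Fin n →₀ ℕ) → (Fin n →₀ ℕ) → Prop) : Prop where
  irrefl : ∀ a, ¬ lt a a
  trans : ∀ a b c, lt a b → lt b c → lt a c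
  total : ∀ a b, a ≠ b → lt a b ∨ lt b a
  add_compat : ∀ a b c, lt a b → lt (a + c) (b + c)
  deg_compat : ∀ a b, mdeg a < mdeg b → lt a b

/-- `β` is the lead monomial of `g` for the graded local order associated to `lt`:
the `lt`-minimal monomial of `g` with nonzero coefficient. -/
def IsLeadMonomial {n : ℕ} (lt : (Fin n →₀ ℕ) → (Fin n →₀ ℕ) → Prop)
    (g : Rn n) (β : Fin n →₀ ℕ) : Prop :=
  coeff β g ≠ 0 ∧ ∀ γ : Fin n →₀ ℕ, coeff γ g ≠ 0 → γ ≠ β → lt β γ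

/-- The initial ideal `in_≥(IR₀) ∩ R`: the monomial ideal of `R` generated by the
lead monomials of nonzero elements of the contraction `IR₀ ∩ R`. -/
def initialIdeal {n : ℕ} (lt : (Fin n →₀ ℕ) → (Fin n →₀ ℕ) → Prop)
    (I : Ideal (Rn n)) : Ideal (Rn n) :=
  Ideal.span {q | ∃ g ∈ contraction I, g ≠ 0 ∧
    ∃ β : Fin n →₀ ℕ, IsLeadMonomial lt g β ∧ q = monomial β 1}

/-- `∂^α` is (up to the scalar `p(x^α)`) the initial term of the dual functional `p`:
`α` is the `lt`-maximal monomial with nonzero coefficient in `p`. -/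
def IsInitialOf {n : ℕ} (lt : (Fin n →₀ ℕ) → (Fin n →₀ ℕ) → Prop)
    (p : Module.Dual ℂ (Rn n)) (α : Fin n →₀ ℕ) : Prop :=
  p (monomial α 1) ≠ 0 ∧ ∀ β : Fin n →₀ ℕ, p (monomial β 1) ≠ 0 → β ≠ α → lt β α

/-!
A functional vanishes on all monomials of degree greater than `d` exactly when it vanishes on
`m ^ (d + 1)`, which those monomials span over `ℂ`. Hence `D₀^d[I]` is the annihilator of
`J = I + m ^ (d + 1)`, that is, the dual of `R ⧸ J`, which is finite-dimensional because
polynomials of degree at most `d` represent all its classes. Finally, a polynomial outside `m` is a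
unit modulo `m ^ (d + 1)`, so inverting it does not change `R ⧸ J`, and `R ⧸ J` is `R₀ ⧸ JR₀`.
-/

universe u v

section LinearAlgebra

theorem finite_quotient_of_sup_eq_top {R M : Type*} [Ring R] [AddCommGroup M] [Module R M]
    {N W : Submodule R M} [Module.Finite R W] (h : N ⊔ W = ⊤) : Module.Finite R (M ⧸ N) := by
  refine Module.Finite.of_surjective (N.mkQ ∘ₗ W.subtype) ?_
  rw [← LinearMap.range_eq_top, LinearMap.range_comp, Submodule.range_subtype]
  exact (Submodule.map_mkQ_eq_top N W).mpr h

theorem rank_dualAnnihilator_eq_lift {K : Type u} {V : Type v} [CommRing K] [AddCommGroup V]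
    [Module K V] (W : Submodule K V) [Module.Free K (V ⧸ W)] [Module.Finite K (V ⧸ W)] :
    Module.rank K W.dualAnnihilator = Cardinal.lift.{u} (Module.rank K (V ⧸ W)) := by
  rw [← W.dualQuotEquivDualAnnihilator.rank_eq, Module.dual_rank_eq]

end LinearAlgebra

section IdealOfVars

variable (σ R : Type*)

theorem ker_eval_zero_eq_idealOfVars [CommSemiring R] :
    RingHom.ker (eval (0 : σ → R)) = idealOfVars σ R := by
  ext f
  rw [← pow_one (idealOfVars σ R), mem_pow_idealOfVars_iff']
  simp [Finsupp.degree_eq_zero_iff, constantCoeff_eq]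

theorem restrictScalars_pow_idealOfVars_eq_span [CommSemiring R] (k : ℕ) :
    (idealOfVars σ R ^ k).restrictScalars R =
      Submodule.span R ((monomial · 1) '' {m : σ →₀ ℕ | k ≤ m.degree}) := by
  rw [pow_idealOfVars, restrictScalars_restrictSupportIdeal, restrictSupport_eq_span]
  rfl

theorem pow_idealOfVars_sup_restrictTotalDegree [CommSemiring R] (d : ℕ) :
    (idealOfVars σ R ^ (d + 1)).restrictScalars R ⊔ restrictTotalDegree σ R d = ⊤ := by
  have degree_cases : {m : σ →₀ ℕ | d + 1 ≤ m.degree} ∪ {m | (m.sum fun _ e => e) ≤ d} =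
      Set.univ :=
    Set.eq_univ_of_forall fun m => lt_or_ge d m.degree
  rw [restrictScalars_pow_idealOfVars_eq_span, restrictTotalDegree, restrictSupport_eq_span,
    ← Submodule.span_union, ← Set.image_union, degree_cases, ← restrictSupport_eq_span,
    restrictSupport_univ]

variable {σ R} in
theorem finite_quotient_of_pow_idealOfVars_le [CommRing R] [Finite σ] {k : ℕ}
    {J : Ideal (MvPolynomial σ R)} (hJ : idealOfVars σ R ^ k ≤ J) :
    Module.Finite R (MvPolynomial σ R ⧸ J.restrictScalars R) := by
  have pow_succ_le : idealOfVars σ R ^ (k + 1) ≤ J := (Ideal.pow_le_pow_right k.le_succ).trans hJ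
  refine finite_quotient_of_sup_eq_top (W := restrictTotalDegree σ R k) (top_le_iff.mp ?_)
  rw [← pow_idealOfVars_sup_restrictTotalDegree σ R k]
  exact sup_le_sup_right (Submodule.restrictScalars_mono R pow_succ_le) _

end IdealOfVars

section Localization

variable {A : Type*} [CommRing A]

theorem isUnit_quotient_mk_of_notMem {p J : Ideal A} [p.IsMaximal] {k : ℕ} (hJ : p ^ k ≤ J)
    {s : A} (hs : s ∉ p) : IsUnit (Ideal.Quotient.mk J s) :=
  (Ideal.Quotient.isUnit_mk_pow_of_notMem p hs).map (Ideal.Quotient.factor hJ)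

/-- The isomorphism `A ⧸ J ≃ S ⧸ JS`, where `S` is the localization of `A` at a submonoid `M` whose
elements are units modulo `J`. -/
def quotientEquivQuotientMap (k : Type*) [CommSemiring k] [Algebra k A] (M : Submonoid A)
    (S : Type*) [CommRing S] [Algebra A S] [Algebra k S] [IsScalarTower k A S] [IsLocalization M S]
    (J : Ideal A) (hM : ∀ s ∈ M, IsUnit (Ideal.Quotient.mk J s)) :
    (A ⧸ J) ≃ₐ[k] (S ⧸ J.map (algebraMap A S)) :=
  ((IsLocalization.atUnits (A ⧸ J) (Algebra.algebraMapSubmonoid (A ⧸ J) M)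
    (by rintro _ ⟨s, hs, rfl⟩; exact hM s hs)).restrictScalars A).restrictScalars k

end Localization

section TruncatedDual

variable {n : ℕ}

instance mIdeal_isMaximal : (mIdeal n).IsMaximal :=
  RingHom.ker_isMaximal_of_surjective _ fun c => ⟨C c, eval_C c⟩

variable (n) in
theorem mIdeal_eq_idealOfVars : mIdeal n = idealOfVars (Fin n) ℂ :=
  ker_eval_zero_eq_idealOfVars (Fin n) ℂ

theorem dualTrunc_eq_dualAnnihilator (d : ℕ) :
    DualTrunc n d = ((mIdeal n ^ (d + 1)).restrictScalars ℂ).dualAnnihilator := by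
  rw [mIdeal_eq_idealOfVars, restrictScalars_pow_idealOfVars_eq_span]
  refine SetLike.coe_injective ?_
  rw [Submodule.coe_dualAnnihilator_span]
  ext p
  rw [Set.mem_ofPred_eq, Set.image_subset_iff]
  rfl

theorem annIdeal_eq_dualAnnihilator (I : Ideal (Rn n)) :
    annIdeal I = (I.restrictScalars ℂ).dualAnnihilator := by
  ext p
  rw [Submodule.mem_dualAnnihilator]
  rfl

theorem truncDualOf_eq_dualAnnihilator (I : Ideal (Rn n)) (d : ℕ) :
    truncDualOf I d = ((I ⊔ mIdeal n ^ (d + 1)).restrictScalars ℂ).dualAnnihilator := by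
  rw [truncDualOf, dualTrunc_eq_dualAnnihilator, annIdeal_eq_dualAnnihilator, inf_comm,
    ← Submodule.dualAnnihilator_sup_eq, Submodule.restrictScalars_sup]

theorem extIdeal_add_pow (I J : Ideal (Rn n)) (k : ℕ) :
    extIdeal I + extIdeal J ^ k = extIdeal (I ⊔ J ^ k) := by
  rw [extIdeal, extIdeal, extIdeal, Ideal.map_sup, Ideal.map_pow, Submodule.add_eq_sup]

end TruncatedDual

/-- `dim_ℂ D₀^d[I] = dim_ℂ R₀/(IR₀ + m^{d+1})` for every `d ≥ 0`. -/
theorem dim_truncated_dual (n : ℕ) (I : Ideal (Rn n)) (d : ℕ) :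
    Module.rank ℂ (truncDualOf I d)
      = Module.rank ℂ (Loc n ⧸ (extIdeal I + extIdeal (mIdeal n) ^ (d + 1))) := by
  let J : Ideal (Rn n) := I ⊔ mIdeal n ^ (d + 1)
  have pow_le : mIdeal n ^ (d + 1) ≤ J := le_sup_right
  have : Module.Finite ℂ (Rn n ⧸ J.restrictScalars ℂ) :=
    finite_quotient_of_pow_idealOfVars_le (mIdeal_eq_idealOfVars n ▸ pow_le)
  calc Module.rank ℂ (truncDualOf I d)
      = Module.rank ℂ (J.restrictScalars ℂ).dualAnnihilator := by
        rw [truncDualOf_eq_dualAnnihilator]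
    _ = Module.rank ℂ (Rn n ⧸ J.restrictScalars ℂ) := by
        rw [rank_dualAnnihilator_eq_lift, Cardinal.lift_id]
    _ = Module.rank ℂ (Rn n ⧸ J) := (Submodule.Quotient.restrictScalarsEquiv ℂ J).rank_eq
    _ = Module.rank ℂ (Loc n ⧸ extIdeal J) :=
        (quotientEquivQuotientMap ℂ (mIdeal n).primeCompl (Loc n) J fun _ hs =>
          isUnit_quotient_mk_of_notMem pow_le hs).toLinearEquiv.rank_eq
    _ = Module.rank ℂ (Loc n ⧸ (extIdeal I + extIdeal (mIdeal n) ^ (d + 1))) := by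
        rw [extIdeal_add_pow]
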